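/- Let n, m be positive integers (so that m + n ≠ 0 and the denominators below are nonzero). Define the rational function c(t,s) = −t(s + 2t + 2st + 2t^2)(−3 − 2s + 4st + 4t^2)/(s + t + 1), and set ℓ = −(n+1) + n/(2(m+n)) and ℓ' = −(m+1) + m/(2(m+n)). Then c(n, ℓ) = c(m, ℓ') = −(2m + n + 2mn)(m + 2n + 2mn)/(m + n). -/

import Mathlib

/-!
In terms of the shifted level `ψ = s + t + 1`, the central charge is `-t P Q / ψ` with `P` and `Q`
affine in `ψ`. Put `N = m + n`. At `ψ = t / (2 N)` the prefactor `t` and one power of `N` cancel,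
and what remains of `P` and `Q` are two polynomials in `t` and `N` that the involution
`t ↦ N - t` exchanges. Hence the ranks `n` and `m = N - n` share their central charge.
-/

variable {K : Type*} [Field K]

/-- The central charge `c(t, s)` of the principal W-algebra of `𝔰𝔭_{2t}` at level `s`, with the rank
`t` allowed to be any field element. At the critical level `s = -(t + 1)` its value is `0`, by the
convention `x / 0 = 0`. -/
def typeCCentralCharge (t s : K) : K :=
  -t * (s + 2 * t + 2 * s * t + 2 * t ^ 2) * (-3 - 2 * s + 4 * s * t + 4 * t ^ 2) / (s + t + 1)

/-- The level at which the rank-`t` algebra takes part in the first family of type-C coincidences.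
The second argument is the sum of the two ranks, so that `ℓ` and `ℓ'` are the levels of `n` and `m`
for the same `N = m + n`. -/
def coincidenceLevel (t N : K) : K :=
  -(t + 1) + t / (2 * N)

theorem typeCCentralCharge_neg_add_one_add (t ψ : K) :
    typeCCentralCharge t (-(t + 1) + ψ) =
      -t * ((2 * t + 1) * ψ - (t + 1)) * (2 * (2 * t - 1) * ψ - (2 * t + 1)) / ψ := by
  have h_shift : -(t + 1) + ψ + t + 1 = ψ := by ring
  rw [typeCCentralCharge, h_shift]
  ring

theorem typeCCentralCharge_coincidenceLevel [NeZero (2 : K)] {t N : K} (ht : t ≠ 0) (hN : N ≠ 0) :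
    typeCCentralCharge t (coincidenceLevel t N) =
      -((2 * t + 1) * N - t * (2 * t - 1)) * (2 * (t + 1) * N - t * (2 * t + 1)) / N := by
  have h_left : (2 * t + 1) * (t / (2 * N)) - (t + 1) =
      -(2 * (t + 1) * N - t * (2 * t + 1)) / (2 * N) := by
    field_simp
    ring
  have h_right : 2 * (2 * t - 1) * (t / (2 * N)) - (2 * t + 1) =
      -((2 * t + 1) * N - t * (2 * t - 1)) / N := by
    field_simp
    ring
  rw [coincidenceLevel, typeCCentralCharge_neg_add_one_add, h_left, h_right]
  field_simp

theorem typeCCentralCharge_coincidenceLevel_sub [NeZero (2 : K)] {t N : K} (ht : t ≠ 0)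
    (htN : N - t ≠ 0) (hN : N ≠ 0) :
    typeCCentralCharge (N - t) (coincidenceLevel (N - t) N) =
      typeCCentralCharge t (coincidenceLevel t N) := by
  have h_swap_left : (2 * (N - t) + 1) * N - (N - t) * (2 * (N - t) - 1) =
      2 * (t + 1) * N - t * (2 * t + 1) := by ring
  have h_swap_right : 2 * (N - t + 1) * N - (N - t) * (2 * (N - t) + 1) =
      (2 * t + 1) * N - t * (2 * t - 1) := by ring
  rw [typeCCentralCharge_coincidenceLevel htN hN, typeCCentralCharge_coincidenceLevel ht hN,
    h_swap_left, h_swap_right, neg_mul, neg_mul, mul_comm]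

theorem typeC_coincidence_central_charges_general [NeZero (2 : K)] {n m : K}
    (hn : n ≠ 0) (hm : m ≠ 0) (hmn : m + n ≠ 0) :
    typeCCentralCharge n (coincidenceLevel n (m + n)) =
        -(2 * m + n + 2 * m * n) * (m + 2 * n + 2 * m * n) / (m + n) ∧
      typeCCentralCharge m (coincidenceLevel m (m + n)) =
        -(2 * m + n + 2 * m * n) * (m + 2 * n + 2 * m * n) / (m + n) := by
  have h_value : typeCCentralCharge n (coincidenceLevel n (m + n)) =
      -(2 * m + n + 2 * m * n) * (m + 2 * n + 2 * m * n) / (m + n) := by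
    rw [typeCCentralCharge_coincidenceLevel hn hmn]
    ring
  have h_coincidence : typeCCentralCharge m (coincidenceLevel m (m + n)) =
      typeCCentralCharge n (coincidenceLevel n (m + n)) := by
    have h_sub : m + n - n = m := add_sub_cancel_right m n
    simpa only [h_sub] using
      typeCCentralCharge_coincidenceLevel_sub hn (h_sub.symm ▸ hm) hmn
  exact ⟨h_value, h_coincidence.trans h_value⟩

/-- Central-charge verification for the first family of type-C coincidences:
with `ℓ = -(n+1) + n/(2(m+n))` and `ℓ' = -(m+1) + m/(2(m+n))`, the central
charges `c(n,ℓ)` and `c(m,ℓ')` both equal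
`-(2m+n+2mn)(m+2n+2mn)/(m+n)`. -/
theorem typeC_coincidence_central_charges (n m : ℕ) (hn : 0 < n) (hm : 0 < m) :
    let cfun : ℂ → ℂ → ℂ := fun t s =>
      -t * (s + 2 * t + 2 * s * t + 2 * t ^ 2)
        * (-3 - 2 * s + 4 * s * t + 4 * t ^ 2) / (s + t + 1)
    let l : ℂ := -((n : ℂ) + 1) + (n : ℂ) / (2 * ((m : ℂ) + (n : ℂ)))
    let l' : ℂ := -((m : ℂ) + 1) + (m : ℂ) / (2 * ((m : ℂ) + (n : ℂ)))
    cfun (n : ℂ) l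
        = -(2 * (m : ℂ) + (n : ℂ) + 2 * (m : ℂ) * (n : ℂ))
            * ((m : ℂ) + 2 * (n : ℂ) + 2 * (m : ℂ) * (n : ℂ)) / ((m : ℂ) + (n : ℂ))
      ∧ cfun (m : ℂ) l'
        = -(2 * (m : ℂ) + (n : ℂ) + 2 * (m : ℂ) * (n : ℂ))
            * ((m : ℂ) + 2 * (n : ℂ) + 2 * (m : ℂ) * (n : ℂ)) / ((m : ℂ) + (n : ℂ)) := by
  exact typeC_coincidence_central_charges_general (Nat.cast_ne_zero.2 hn.ne')
    (Nat.cast_ne_zero.2 hm.ne') (by exact_mod_cast (Nat.add_pos_left hm n).ne')
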